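/- arXiv:2211.03798 — 5 statements merged into one kernel-verified Lean document; each statement's English description precedes it below -/
import Mathlib

section
/- Let A be an additive abelian group and θ an exchange-statistics function on A. If a ∈ A has finite additive order N, then θ(a)^(2N) = 1; moreover, if N is odd, then θ(a)^N = 1. -/
/-- The braiding associated to an exchange-statistics function `θ`:
`B(a,b) = θ(a+b) · θ(a)⁻¹ · θ(b)⁻¹`. -/
noncomputable def braiding {A : Type*} [AddCommGroup A] (θ : A → ℂ) (a b : A) : ℂ :=
  θ (a + b) * (θ a)⁻¹ * (θ b)⁻¹

/-- An exchange-statistics function (Abelian anyon theory) on an additive abelian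
group `A`: a unimodular map `θ : A → ℂ` with `θ 0 = 1`, `θ (-a) = θ a`, whose
associated braiding is biadditive. -/
structure IsExchangeStats {A : Type*} [AddCommGroup A] (θ : A → ℂ) : Prop where
  abs_eq_one : ∀ a, ‖θ a‖ = 1
  map_zero : θ 0 = 1
  map_neg : ∀ a, θ (-a) = θ a
  braiding_add_left : ∀ a a' b, braiding θ (a + a') b = braiding θ a b * braiding θ a' b
  braiding_add_right : ∀ a b b', braiding θ a (b + b') = braiding θ a b * braiding θ a b'

/-- A Lagrangian subgroup of an Abelian anyon theory `(A, θ)`. -/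
def IsLagrangian {A : Type*} [AddCommGroup A] (θ : A → ℂ) (L : AddSubgroup A) : Prop :=
  (∀ c ∈ L, θ c = 1) ∧ (∀ c ∈ L, ∀ c' ∈ L, braiding θ c c' = 1) ∧
  (∀ a : A, a ∉ L → ∃ c ∈ L, braiding θ a c ≠ 1)

/-!
The braiding `B` measures the failure of `θ` to be multiplicative, so by induction
`θ (n • a) = θ a ^ n * B a a ^ n.choose 2`. If `n • a = 0`, the left-hand side is `1`, and
`B a a ^ n = B (n • a) a = 1`. Since `n` divides `2 * n.choose 2`, and even `n.choose 2` if `n` is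
odd, the correction factor drops out after squaring, and at once for odd `n`.
-/

section MulPolar

variable {A G₀ : Type*} [CommGroupWithZero G₀]

/-- The multiplicative analogue of `QuadraticMap.polar`. For complex-valued maps on a commutative
group it unfolds to `braiding`: the values lie in a group with zero so that `ℂ` itself, rather than
its group of units, is covered. -/
def mulPolar [Add A] (θ : A → G₀) (a b : A) : G₀ :=
  θ (a + b) * (θ a)⁻¹ * (θ b)⁻¹

theorem mulPolar_ne_zero [Add A] {θ : A → G₀} (hne : ∀ a, θ a ≠ 0) (a b : A) :
    mulPolar θ a b ≠ 0 :=
  mul_ne_zero (mul_ne_zero (hne _) (inv_ne_zero (hne a))) (inv_ne_zero (hne b))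

theorem map_add_eq_mul_mulPolar [Add A] {θ : A → G₀} {a b : A} (ha : θ a ≠ 0) (hb : θ b ≠ 0) :
    θ (a + b) = θ a * θ b * mulPolar θ a b := by
  unfold mulPolar
  field_simp

variable [AddMonoid A] {θ : A → G₀} (hne : ∀ a, θ a ≠ 0)
  (hadd : ∀ a a' b, mulPolar θ (a + a') b = mulPolar θ a b * mulPolar θ a' b)

include hne hadd

theorem mulPolar_zero_left (b : A) : mulPolar θ 0 b = 1 := by
  have hidem := hadd 0 0 b
  rw [add_zero] at hidem
  exact (mul_eq_left₀ (mulPolar_ne_zero hne 0 b)).mp hidem.symm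

theorem map_zero_of_mulPolar_add_left : θ 0 = 1 := by
  have hidem := map_add_eq_mul_mulPolar (hne 0) (hne 0)
  rw [add_zero, mulPolar_zero_left hne hadd, mul_one] at hidem
  exact (mul_eq_left₀ (hne 0)).mp hidem.symm

theorem mulPolar_nsmul_left (n : ℕ) (a b : A) : mulPolar θ (n • a) b = mulPolar θ a b ^ n := by
  induction n with
  | zero => rw [zero_nsmul, pow_zero, mulPolar_zero_left hne hadd]
  | succ n ih => rw [succ_nsmul, hadd, ih, pow_succ]

theorem map_nsmul_eq_pow_mul_mulPolar_pow (n : ℕ) (a : A) :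
    θ (n • a) = θ a ^ n * mulPolar θ a a ^ n.choose 2 := by
  induction n with
  | zero => simp [map_zero_of_mulPolar_add_left hne hadd]
  | succ n ih =>
    calc θ ((n + 1) • a)
        = θ (n • a) * θ a * mulPolar θ (n • a) a := by
          rw [succ_nsmul, map_add_eq_mul_mulPolar (hne _) (hne a)]
      _ = θ a ^ n * mulPolar θ a a ^ n.choose 2 * θ a * mulPolar θ a a ^ n := by
          rw [ih, mulPolar_nsmul_left hne hadd]
      _ = θ a ^ (n + 1) * mulPolar θ a a ^ (n + 1).choose 2 := by
          rw [Nat.choose_succ_succ' n 1, Nat.choose_one_right, pow_succ, pow_add]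
          ac_rfl

end MulPolar

theorem dvd_choose_two_mul_two (n : ℕ) : n ∣ n.choose 2 * 2 := by
  rw [Nat.choose_two_right, Nat.div_two_mul_two_of_even (Nat.even_mul_pred_self n)]
  exact dvd_mul_right n (n - 1)

theorem dvd_choose_two_of_odd {n : ℕ} (hn : Odd n) : n ∣ n.choose 2 :=
  hn.coprime_two_right.dvd_of_dvd_mul_right (dvd_choose_two_mul_two n)

theorem theta_pow_order_general {A G₀ : Type*} [AddMonoid A] [CommGroupWithZero G₀] {θ : A → G₀}
    (hne : ∀ a, θ a ≠ 0)
    (hadd : ∀ a a' b, mulPolar θ (a + a') b = mulPolar θ a b * mulPolar θ a' b)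
    {a : A} {n : ℕ} (ha : n • a = 0) :
    θ a ^ (2 * n) = 1 ∧ (Odd n → θ a ^ n = 1) := by
  have hpolar : mulPolar θ a a ^ n = 1 := by
    rw [← mulPolar_nsmul_left hne hadd, ha, mulPolar_zero_left hne hadd]
  have hpolar_of_dvd {k : ℕ} (hk : n ∣ k) : mulPolar θ a a ^ k = 1 := by
    obtain ⟨m, rfl⟩ := hk
    rw [pow_mul, hpolar, one_pow]
  have hθ : θ a ^ n * mulPolar θ a a ^ n.choose 2 = 1 := by
    rw [← map_nsmul_eq_pow_mul_mulPolar_pow hne hadd, ha, map_zero_of_mulPolar_add_left hne hadd]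
  constructor
  · calc θ a ^ (2 * n)
        = (θ a ^ n * mulPolar θ a a ^ n.choose 2) ^ 2 := by
          rw [mul_pow, ← pow_mul (mulPolar θ a a), hpolar_of_dvd (dvd_choose_two_mul_two n),
            mul_one, ← pow_mul, mul_comm 2]
      _ = 1 := by rw [hθ, one_pow]
  · intro hn
    rwa [hpolar_of_dvd (dvd_choose_two_of_odd hn), mul_one] at hθ

theorem IsExchangeStats.ne_zero {A : Type*} [AddCommGroup A] {θ : A → ℂ}
    (hθ : IsExchangeStats θ) (a : A) : θ a ≠ 0 :=
  norm_ne_zero_iff.mp (by rw [hθ.abs_eq_one]; exact one_ne_zero)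

/-- If `a` has finite additive order `N`, then `θ(a)^(2N) = 1`; and if `N` is odd,
then `θ(a)^N = 1`. -/
theorem theta_pow_order {A : Type*} [AddCommGroup A] (θ : A → ℂ)
    (hθ : IsExchangeStats θ) (a : A) (N : ℕ) (hN : N ≠ 0) (ha : addOrderOf a = N) :
    θ a ^ (2 * N) = 1 ∧ (Odd N → θ a ^ N = 1) :=
  theta_pow_order_general hθ.ne_zero hθ.braiding_add_left (ha ▸ addOrderOf_nsmul_eq_zero a)
end

section
/- Let N ≥ 1 be an integer and θ an exchange-statistics function on ZMod N. Then there exists an integer m such that θ(k) = exp(πi·m·(k.val)²/N) for every k ∈ ZMod N; moreover, if N is odd then m can be chosen even (so that θ(k) = exp(2πi·t·(k.val)²/N) for an integer t). -/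
/-! The braiding `B` is a bicharacter with `B(a, a) = θ(a) ^ 2`, so `θ` behaves like a quadratic
form: `θ(k • a) = θ(a) ^ k ^ 2`. If `N • a = 0`, then `θ(a) ^ (2 * N) = B(N • a, a) = 1`, so `θ(a)`
is `exp(π * I * m / N)` for some `m`. Moreover `θ(a) ^ N ^ 2 = θ(N • a) = 1`; for odd `N` the two
relations give `θ(a) ^ N = 1`, which says `(-1) ^ m = 1`. -/

namespace IsExchangeStats

variable {A : Type*} [AddCommGroup A] {θ : A → ℂ}

theorem ne_zero_s6 (hθ : IsExchangeStats θ) (a : A) : θ a ≠ 0 :=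
  norm_ne_zero_iff.mp <| by simp [hθ.abs_eq_one a]

theorem map_add (hθ : IsExchangeStats θ) (a b : A) :
    θ (a + b) = θ a * θ b * braiding θ a b := by
  have ha := hθ.ne_zero_s6 a
  have hb := hθ.ne_zero_s6 b
  simp only [braiding]
  field_simp

theorem braiding_zero_left (hθ : IsExchangeStats θ) (b : A) : braiding θ 0 b = 1 := by
  simp [braiding, hθ.map_zero, hθ.ne_zero_s6 b]

theorem braiding_nsmul_left (hθ : IsExchangeStats θ) (n : ℕ) (a b : A) :
    braiding θ (n • a) b = braiding θ a b ^ n := by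
  induction n with
  | zero => rw [zero_nsmul, hθ.braiding_zero_left, pow_zero]
  | succ n ih => rw [succ_nsmul, hθ.braiding_add_left, ih, pow_succ]

theorem braiding_self (hθ : IsExchangeStats θ) (a : A) : braiding θ a a = θ a ^ 2 := by
  have ha := hθ.ne_zero_s6 a
  have h_neg : braiding θ (-a) a = (θ a ^ 2)⁻¹ := by
    simp [braiding, hθ.map_zero, hθ.map_neg, sq]
  have h_mul : (θ a ^ 2)⁻¹ * braiding θ a a = 1 := by
    rw [← h_neg, ← hθ.braiding_add_left, neg_add_cancel, hθ.braiding_zero_left]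
  exact ((inv_mul_eq_one₀ (pow_ne_zero 2 ha)).mp h_mul).symm

theorem map_nsmul (hθ : IsExchangeStats θ) (n : ℕ) (a : A) : θ (n • a) = θ a ^ n ^ 2 := by
  induction n with
  | zero => simp [hθ.map_zero]
  | succ n ih =>
    rw [succ_nsmul, hθ.map_add, hθ.braiding_nsmul_left, hθ.braiding_self, ih]
    ring

theorem pow_two_mul_eq_one_of_nsmul_eq_zero (hθ : IsExchangeStats θ) {n : ℕ} {a : A}
    (ha : n • a = 0) : θ a ^ (2 * n) = 1 := by
  rw [pow_mul, ← hθ.braiding_self, ← hθ.braiding_nsmul_left, ha, hθ.braiding_zero_left]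

theorem pow_eq_one_of_odd_of_nsmul_eq_zero (hθ : IsExchangeStats θ) {n : ℕ} (hn : Odd n)
    {a : A} (ha : n • a = 0) : θ a ^ n = 1 := by
  have h_sq : θ a ^ n ^ 2 = 1 := by rw [← hθ.map_nsmul, ha, hθ.map_zero]
  have h_gcd : Nat.gcd (2 * n) (n ^ 2) = n := by
    rw [sq, Nat.gcd_mul_right, hn.coprime_two_left.gcd_eq_one, one_mul]
  exact h_gcd ▸ pow_gcd_eq_one.mpr ⟨hθ.pow_two_mul_eq_one_of_nsmul_eq_zero ha, h_sq⟩

end IsExchangeStats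

theorem exists_eq_exp_pi_mul_I_of_pow_two_mul_eq_one {n : ℕ} (hn : n ≠ 0) {z : ℂ}
    (hz : z ^ (2 * n) = 1) : ∃ m : ℕ, z = Complex.exp (Real.pi * Complex.I * m / n) := by
  have : NeZero (2 * n) := ⟨by lia⟩
  obtain ⟨m, -, rfl⟩ :=
    (Complex.isPrimitiveRoot_exp (2 * n) (by lia)).eq_pow_of_pow_eq_one hz
  refine ⟨m, ?_⟩
  rw [← Complex.exp_nat_mul]
  congr 1
  push_cast
  field_simp

theorem even_of_exp_pi_mul_I_pow_eq_one {n m : ℕ} (hn : n ≠ 0)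
    (h : Complex.exp (Real.pi * Complex.I * m / n) ^ n = 1) : Even m := by
  have h_exp : Complex.exp (Real.pi * Complex.I * m / n) ^ n = (-1) ^ m := by
    rw [← Complex.exp_pi_mul_I, ← Complex.exp_nat_mul, ← Complex.exp_nat_mul]
    congr 1
    field_simp
  exact (neg_one_pow_eq_one_iff_even (by norm_num)).mp (h_exp.symm.trans h)

theorem theta_cyclic_classification_general {A : Type*} [AddCommGroup A] {θ : A → ℂ}
    (hθ : IsExchangeStats θ) {N : ℕ} (hN : N ≠ 0) {a : A} (ha : N • a = 0) :
    ∃ m : ℤ,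
      (∀ k : ℕ,
        θ (k • a) = Complex.exp (Real.pi * Complex.I * (m : ℂ) * (k : ℂ) ^ 2 / (N : ℂ))) ∧
      (Odd N → Even m) := by
  obtain ⟨m, hm⟩ :=
    exists_eq_exp_pi_mul_I_of_pow_two_mul_eq_one hN (hθ.pow_two_mul_eq_one_of_nsmul_eq_zero ha)
  refine ⟨m, fun k => ?_, fun hN_odd => ?_⟩
  · rw [hθ.map_nsmul, hm, ← Complex.exp_nat_mul]
    congr 1
    push_cast
    ring
  · have h_pow := hθ.pow_eq_one_of_odd_of_nsmul_eq_zero hN_odd ha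
    rw [hm] at h_pow
    exact_mod_cast even_of_exp_pi_mul_I_pow_eq_one hN h_pow

/-- Every exchange-statistics function on `ZMod N` is of the form
`θ(k) = exp(πi·m·k.val²/N)` for some integer `m`; if `N` is odd, `m` can be
chosen even. -/
theorem theta_cyclic_classification (N : ℕ) (hN : 1 ≤ N) (θ : ZMod N → ℂ)
    (hθ : IsExchangeStats θ) :
    ∃ m : ℤ,
      (∀ k : ZMod N,
        θ k = Complex.exp (Real.pi * Complex.I * (m : ℂ) * ((k.val : ℂ)) ^ 2 / (N : ℂ))) ∧
      (Odd N → Even m) := by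
  have : NeZero N := ⟨Nat.one_le_iff_ne_zero.mp hN⟩
  obtain ⟨m, hm, hm_even⟩ :=
    theta_cyclic_classification_general hθ (NeZero.ne N) (a := 1) (by simp)
  exact ⟨m, fun k => by simpa using hm k.val, hm_even⟩
end

section
/- Let N ≥ 1 and consider the ℤ_N toric code anyon theory (A, θ_TC) on A = ZMod N × ZMod N with braiding B_TC. Then the set of anyons braiding trivially with the anyon e⁻¹m = (−1, 1) is exactly the diagonal subgroup: {a ∈ A : B_TC((−1,1), a) = 1} = {(k,k) : k ∈ ZMod N}. Moreover, θ_TC((k,k)) = exp(2πi·(k.val)²/N) for every k ∈ ZMod N. -/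
/-- The exchange statistics of the `ℤ_N` toric code anyon theory on
`ZMod N × ZMod N`: `θ_TC(e,m) = exp(2πi·e·m/N)`. -/
noncomputable def thetaTC (N : ℕ) (a : ZMod N × ZMod N) : ℂ :=
  Complex.exp (2 * Real.pi * Complex.I * (a.1.val : ℂ) * (a.2.val : ℂ) / (N : ℂ))

/-! The toric code statistics factor as `θ_TC = χ ∘ q`, where `q (e, m) = e * m` is the hyperbolic
quadratic form on `ZMod N × ZMod N` and `χ` is the standard additive character of `ZMod N`. The
braiding of such a composite is `χ` applied to the polar form of `q`. Since `χ` is injective, `a`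
braids trivially with `(-1, 1)` exactly when the polar form vanishes there, i.e. when
`-a.2 + a.1 = 0`. -/

theorem braiding_addChar_comp {A G : Type*} [AddCommGroup A] [AddCommGroup G] (χ : AddChar G ℂ)
    (q : A → G) (a b : A) :
    braiding (fun x ↦ χ (q x)) a b = χ (QuadraticMap.polar q a b) := by
  simp only [braiding, QuadraticMap.polar, AddChar.map_sub_eq_div, div_eq_mul_inv]

theorem polar_fst_mul_snd {R : Type*} [NonUnitalNonAssocRing R] (a b : R × R) :
    QuadraticMap.polar (fun x : R × R ↦ x.1 * x.2) a b = a.1 * b.2 + b.1 * a.2 := by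
  simp only [QuadraticMap.polar, Prod.fst_add, Prod.snd_add, add_mul, mul_add]
  abel

section ToricCode

variable {N : ℕ} [NeZero N]

theorem thetaTC_eq_stdAddChar (a : ZMod N × ZMod N) :
    thetaTC N a = ZMod.stdAddChar (a.1 * a.2) := by
  have lift_mul : ((a.1.val * a.2.val : ℤ) : ZMod N) = a.1 * a.2 := by
    simp only [Int.cast_mul, Int.cast_natCast, ZMod.natCast_zmod_val]
  rw [← lift_mul, ZMod.stdAddChar_coe, thetaTC]
  push_cast
  rw [mul_assoc _ (a.1.val : ℂ)]

theorem braiding_thetaTC (a b : ZMod N × ZMod N) :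
    braiding (thetaTC N) a b = ZMod.stdAddChar (a.1 * b.2 + b.1 * a.2) := by
  rw [funext thetaTC_eq_stdAddChar, braiding_addChar_comp, polar_fst_mul_snd]

theorem braiding_thetaTC_eq_one_iff (a b : ZMod N × ZMod N) :
    braiding (thetaTC N) a b = 1 ↔ a.1 * b.2 + b.1 * a.2 = 0 := by
  rw [braiding_thetaTC]
  exact ZMod.injective_stdAddChar.eq_iff' (AddChar.map_zero_eq_one _)

theorem braiding_thetaTC_neg_one_one_eq_one_iff (a : ZMod N × ZMod N) :
    braiding (thetaTC N) (-1, 1) a = 1 ↔ a.1 = a.2 := by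
  rw [braiding_thetaTC_eq_one_iff, neg_one_mul, mul_one, neg_add_eq_zero, eq_comm]

end ToricCode

/-- In the `ℤ_N` toric code theory, the anyons braiding trivially with
`e⁻¹m = (-1,1)` are exactly the diagonal anyons `(k,k)`, and the diagonal anyon
`(k,k)` has exchange statistics `exp(2πi·k²/N)`. -/
theorem gauge_out_antisemion_diag (N : ℕ) [NeZero N] :
    ({a : ZMod N × ZMod N | braiding (thetaTC N) (-1, 1) a = 1} =
      {a : ZMod N × ZMod N | ∃ k : ZMod N, a = (k, k)}) ∧
    (∀ k : ZMod N,
      thetaTC N (k, k) =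
        Complex.exp (2 * Real.pi * Complex.I * ((k.val : ℂ)) ^ 2 / (N : ℂ))) := by
  refine ⟨Set.ext fun a ↦ ?_, fun k ↦ ?_⟩
  · simp only [Set.mem_ofPred_eq, braiding_thetaTC_neg_one_one_eq_one_iff]
    constructor
    · intro fst_eq_snd
      exact ⟨a.1, Prod.ext rfl fst_eq_snd.symm⟩
    · rintro ⟨k, rfl⟩
      rfl
  · rw [thetaTC, mul_assoc _ (k.val : ℂ), ← sq]
end

section
/- Let p be a prime. On A = (ZMod p × ZMod p) × (ZMod p² × ZMod p²) define θ(((e₁,m₁),(e₂,m₂))) = exp(2πi·e₁.val·m₁.val/p)·exp(2πi·e₂.val·m₂.val/p²) (the product of a ℤ_p and a ℤ_{p²} toric code theory), with braiding B. Let a₁ = ((0,1),(0,0)) and a₂ = ((1,0),(0,1)). Then: (i) a₁ has additive order p and a₂ has additive order p²; (ii) for all integers j, n, θ(j•a₁ + n•a₂) = exp(2πi·j·n/p); in particular θ(a₁) = θ(a₂) = 1 and B(a₁,a₂) = exp(2πi/p); and (iii) the additive subgroup generated by {a₁, a₂} has cardinality p³. -/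
/-- The product of a `ℤ_p` and a `ℤ_{p²}` toric code theory on
`(ZMod p × ZMod p) × (ZMod p² × ZMod p²)`. -/
noncomputable def thetaStack (p : ℕ) (a : (ZMod p × ZMod p) × (ZMod (p ^ 2) × ZMod (p ^ 2))) : ℂ :=
  Complex.exp (2 * Real.pi * Complex.I * (a.1.1.val : ℂ) * (a.1.2.val : ℂ) / (p : ℂ)) *
    Complex.exp (2 * Real.pi * Complex.I * (a.2.1.val : ℂ) * (a.2.2.val : ℂ) / ((p : ℂ) ^ 2))

/-!
The exchange statistics of a toric code are the standard additive character evaluated at the product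
of the electric and magnetic charges. As `j • a₁ + n • a₂ = ((n, j), (0, n))`, the second layer
contributes nothing and the first gives `exp (2πi·j·n/p)`; the braiding of `a₁` and `a₂` is the case
`j = n = 1`. No nonzero multiple of `a₁` is a multiple of `a₂`, since `a₂` carries no magnetic
charge in the first layer; hence the order of `⟨a₁, a₂⟩` is the product of the orders of its
generators.
-/

theorem natCard_addSubgroup_sup_of_disjoint {G : Type*} [AddGroup G] {H K : AddSubgroup G}
    [K.Normal] (h : Disjoint H K) :
    Nat.card ↥(H ⊔ K) = Nat.card H * Nat.card K := by
  have relIndex_eq : K.relIndex (H ⊔ K) = Nat.card H := by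
    rw [AddSubgroup.relIndex_sup_right, ← AddSubgroup.inf_relIndex_right, inf_comm, h.eq_bot,
      AddSubgroup.relIndex_bot_left]
  calc Nat.card ↥(H ⊔ K)
      = (⊥ : AddSubgroup G).relIndex (H ⊔ K) := (AddSubgroup.relIndex_bot_left _).symm
    _ = (⊥ : AddSubgroup G).relIndex K * K.relIndex (H ⊔ K) :=
        (AddSubgroup.relIndex_mul_relIndex ⊥ K (H ⊔ K) bot_le le_sup_right).symm
    _ = Nat.card H * Nat.card K := by
        rw [relIndex_eq, AddSubgroup.relIndex_bot_left, mul_comm]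

theorem natCard_addSubgroup_closure_pair_of_disjoint {G : Type*} [AddCommGroup G] {a b : G}
    (h : Disjoint (AddSubgroup.zmultiples a) (AddSubgroup.zmultiples b)) :
    Nat.card (AddSubgroup.closure ({a, b} : Set G)) = addOrderOf a * addOrderOf b := by
  rw [Set.insert_eq, AddSubgroup.closure_union, ← AddSubgroup.zmultiples_eq_closure,
    ← AddSubgroup.zmultiples_eq_closure, natCard_addSubgroup_sup_of_disjoint h, Nat.card_zmultiples,
    Nat.card_zmultiples]

theorem exp_val_mul_val_eq_stdAddChar {N : ℕ} [NeZero N] (x y : ZMod N) :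
    Complex.exp (2 * Real.pi * Complex.I * (x.val : ℂ) * (y.val : ℂ) / (N : ℂ)) =
      ZMod.stdAddChar (x * y) := by
  have cast_eq : (((x.val * y.val : ℕ) : ℤ) : ZMod N) = x * y := by simp
  rw [← cast_eq, ZMod.stdAddChar_coe]
  push_cast
  rw [← mul_assoc]

/-- The anyons `((e₁, m₁), (e₂, m₂))` of a stack of a `ℤ_d` and a `ℤ_M` toric code. -/
abbrev ToricStack (d M : ℕ) : Type := (ZMod d × ZMod d) × (ZMod M × ZMod M)

namespace ToricStack

section Generators

variable (d M : ℕ)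

/-- The generator `a₁ = m₁`: the elementary magnetic charge of the first layer. -/
def magneticOne : ToricStack d M := ((0, 1), (0, 0))

/-- The generator `a₂ = e₁m₂`: the elementary electric charge of the first layer together with
the elementary magnetic charge of the second. -/
def electricOneMagneticTwo : ToricStack d M := ((1, 0), (0, 1))

theorem zsmul_magneticOne_add_zsmul_electricOneMagneticTwo (j n : ℤ) :
    j • magneticOne d M + n • electricOneMagneticTwo d M =
      (((n : ZMod d), (j : ZMod d)), ((0 : ZMod M), (n : ZMod M))) := by
  simp [magneticOne, electricOneMagneticTwo]

theorem addOrderOf_magneticOne : addOrderOf (magneticOne d M) = d := by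
  simp [magneticOne, Prod.addOrderOf]

theorem addOrderOf_electricOneMagneticTwo :
    addOrderOf (electricOneMagneticTwo d M) = d.lcm M := by
  simp [electricOneMagneticTwo, Prod.addOrderOf]

theorem disjoint_zmultiples_magneticOne_electricOneMagneticTwo :
    Disjoint (AddSubgroup.zmultiples (magneticOne d M))
      (AddSubgroup.zmultiples (electricOneMagneticTwo d M)) := by
  rw [AddSubgroup.disjoint_def]
  rintro _ ⟨j, rfl⟩ ⟨n, h⟩
  have j_eq_zero : (j : ZMod d) = 0 := by
    simpa [magneticOne, electricOneMagneticTwo] using (congrArg (fun a ↦ a.1.2) h).symm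
  simp [magneticOne, j_eq_zero]

theorem natCard_closure_magneticOne_electricOneMagneticTwo :
    Nat.card (AddSubgroup.closure {magneticOne d M, electricOneMagneticTwo d M}) =
      d * d.lcm M := by
  rw [natCard_addSubgroup_closure_pair_of_disjoint
      (disjoint_zmultiples_magneticOne_electricOneMagneticTwo d M),
    addOrderOf_magneticOne, addOrderOf_electricOneMagneticTwo]

end Generators

section ExchangeStatistics

open ZMod (stdAddChar)

variable (p : ℕ) [NeZero p]

theorem thetaStack_eq_stdAddChar_mul_stdAddChar (a : ToricStack p (p ^ 2)) :
    thetaStack p a = stdAddChar (a.1.1 * a.1.2) * stdAddChar (a.2.1 * a.2.2) := by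
  rw [← exp_val_mul_val_eq_stdAddChar, ← exp_val_mul_val_eq_stdAddChar, Nat.cast_pow, thetaStack]

theorem thetaStack_zsmul_add_zsmul (j n : ℤ) :
    thetaStack p (j • magneticOne p (p ^ 2) + n • electricOneMagneticTwo p (p ^ 2)) =
      Complex.exp (2 * Real.pi * Complex.I * (j : ℂ) * (n : ℂ) / (p : ℂ)) := by
  calc thetaStack p (j • magneticOne p (p ^ 2) + n • electricOneMagneticTwo p (p ^ 2))
      = stdAddChar ((n : ZMod p) * (j : ZMod p)) * stdAddChar (0 * (n : ZMod (p ^ 2))) := by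
        rw [zsmul_magneticOne_add_zsmul_electricOneMagneticTwo,
          thetaStack_eq_stdAddChar_mul_stdAddChar]
    _ = stdAddChar ((j * n : ℤ) : ZMod p) := by
        rw [zero_mul, AddChar.map_zero_eq_one, mul_one, Int.cast_mul, mul_comm]
    _ = Complex.exp (2 * Real.pi * Complex.I * (j : ℂ) * (n : ℂ) / (p : ℂ)) := by
        rw [ZMod.stdAddChar_coe, Int.cast_mul, ← mul_assoc]

theorem thetaStack_magneticOne : thetaStack p (magneticOne p (p ^ 2)) = 1 := by
  simpa using thetaStack_zsmul_add_zsmul p 1 0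

theorem thetaStack_electricOneMagneticTwo :
    thetaStack p (electricOneMagneticTwo p (p ^ 2)) = 1 := by
  simpa using thetaStack_zsmul_add_zsmul p 0 1

theorem braiding_magneticOne_electricOneMagneticTwo :
    braiding (thetaStack p) (magneticOne p (p ^ 2)) (electricOneMagneticTwo p (p ^ 2)) =
      Complex.exp (2 * Real.pi * Complex.I / (p : ℂ)) := by
  rw [braiding, thetaStack_magneticOne, thetaStack_electricOneMagneticTwo]
  simpa using thetaStack_zsmul_add_zsmul p 1 1

end ExchangeStatistics

end ToricStack

open ToricStack in
theorem zp_zpsq_subtheory_general (p : ℕ) [NeZero p] :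
    addOrderOf (magneticOne p (p ^ 2)) = p ∧
    addOrderOf (electricOneMagneticTwo p (p ^ 2)) = p ^ 2 ∧
    (∀ j n : ℤ,
      thetaStack p (j • magneticOne p (p ^ 2) + n • electricOneMagneticTwo p (p ^ 2)) =
        Complex.exp (2 * Real.pi * Complex.I * (j : ℂ) * (n : ℂ) / (p : ℂ))) ∧
    thetaStack p (magneticOne p (p ^ 2)) = 1 ∧
    thetaStack p (electricOneMagneticTwo p (p ^ 2)) = 1 ∧
    braiding (thetaStack p) (magneticOne p (p ^ 2)) (electricOneMagneticTwo p (p ^ 2)) =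
      Complex.exp (2 * Real.pi * Complex.I / (p : ℂ)) ∧
    Nat.card (AddSubgroup.closure
      {magneticOne p (p ^ 2), electricOneMagneticTwo p (p ^ 2)}) = p ^ 3 := by
  have lcm_eq : p.lcm (p ^ 2) = p ^ 2 := Nat.lcm_eq_right (dvd_pow_self p two_ne_zero)
  refine ⟨addOrderOf_magneticOne p _, ?_, thetaStack_zsmul_add_zsmul p, thetaStack_magneticOne p,
    thetaStack_electricOneMagneticTwo p, braiding_magneticOne_electricOneMagneticTwo p, ?_⟩
  · rw [addOrderOf_electricOneMagneticTwo, lcm_eq]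
  · rw [natCard_closure_magneticOne_electricOneMagneticTwo, lcm_eq, ← pow_succ']

/-- In a stack of a `ℤ_p` and a `ℤ_{p²}` toric code, the anyons `a₁ = m₁` and
`a₂ = e₁m₂` have orders `p` and `p²`, satisfy
`θ(a₁^j a₂^n) = exp(2πi·j·n/p)` (so `θ(a₁) = θ(a₂) = 1` and
`B(a₁,a₂) = exp(2πi/p)`), and generate a subgroup of cardinality `p³`. -/
theorem zp_zpsq_subtheory (p : ℕ) (hp : p.Prime) :
    addOrderOf ((((0 : ZMod p), 1), ((0 : ZMod (p ^ 2)), 0)) :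
        (ZMod p × ZMod p) × (ZMod (p ^ 2) × ZMod (p ^ 2))) = p ∧
    addOrderOf ((((1 : ZMod p), 0), ((0 : ZMod (p ^ 2)), 1)) :
        (ZMod p × ZMod p) × (ZMod (p ^ 2) × ZMod (p ^ 2))) = p ^ 2 ∧
    (∀ j n : ℤ,
      thetaStack p
          (j • ((((0 : ZMod p), 1), ((0 : ZMod (p ^ 2)), 0)) :
              (ZMod p × ZMod p) × (ZMod (p ^ 2) × ZMod (p ^ 2))) +
            n • ((((1 : ZMod p), 0), ((0 : ZMod (p ^ 2)), 1)) :
              (ZMod p × ZMod p) × (ZMod (p ^ 2) × ZMod (p ^ 2)))) =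
        Complex.exp (2 * Real.pi * Complex.I * (j : ℂ) * (n : ℂ) / (p : ℂ))) ∧
    thetaStack p (((0, 1), (0, 0))) = 1 ∧
    thetaStack p (((1, 0), (0, 1))) = 1 ∧
    braiding (thetaStack p) (((0, 1), (0, 0))) (((1, 0), (0, 1))) =
      Complex.exp (2 * Real.pi * Complex.I / (p : ℂ)) ∧
    Nat.card
        (AddSubgroup.closure
          ({(((0 : ZMod p), 1), ((0 : ZMod (p ^ 2)), 0)),
            (((1 : ZMod p), 0), ((0 : ZMod (p ^ 2)), 1))} :
            Set ((ZMod p × ZMod p) × (ZMod (p ^ 2) × ZMod (p ^ 2))))) = p ^ 3 := by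
  have : NeZero p := ⟨hp.ne_zero⟩
  exact zp_zpsq_subtheory_general p
end

section
/- Let p be a prime and A = (ZMod p × ZMod p) × (ZMod p² × ZMod p²) with θ(((e₁,m₁),(e₂,m₂))) = exp(2πi·e₁.val·m₁.val/p)·exp(2πi·e₂.val·m₂.val/p²) and braiding B. Let a₁ = ((0,1),(0,0)), a₂ = ((1,0),(0,1)), and let g₁ = ((0,−1),(p,0)) and g₂ = ((0,0),(0,−1)) be the gauged-out anyons m₁⁻¹e₂^p and m₂⁻¹. Then the set of anyons braiding trivially with both g₁ and g₂ is exactly the subgroup generated by a₁ and a₂: {x ∈ A : B(x,g₁) = 1 ∧ B(x,g₂) = 1} = AddSubgroup.closure {a₁, a₂}. -/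
/-!
The exponential `exp (2πi e.val m.val / N)` is the value at `e * m` of the standard additive
character `ψ` of `ZMod N`, so `(e, m)` and `(e', m')` braid with phase `ψ (e * m' + e' * m)`, and
the braiding of a stack is the product of the braidings of its layers. Since `ψ` is injective, a
phase `ψ x` is trivial exactly when `x = 0`. For an anyon `((e₁, m₁), (e₂, m₂))`, trivial braiding
with `g₂` says `e₂ = 0`, and trivial braiding with `g₁` says that `e₁` is the reduction of `m₂`,
because `p / p ^ 2 = 1 / p` turns the character of `ZMod (p ^ 2)` on multiples of `p` into the
character of `ZMod p`. These two equations cut out the subgroup generated by `a₁` and `a₂`.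
-/

/-- The exchange statistics `(e, m) ↦ ψ (e * m)` of a toric code with electric and magnetic charges
in a ring `R`. The `ℤ_N` toric code is the case of the standard character of `ZMod N`. -/
def toricCodeStats {R : Type*} [Ring R] (ψ : AddChar R ℂ) (a : R × R) : ℂ :=
  ψ (a.1 * a.2)

/-- The exchange statistics of the stack of two anyon theories: anyons of different layers braid
trivially, so the phases multiply. -/
def stackStats {A B : Type*} (θ : A → ℂ) (η : B → ℂ) (x : A × B) : ℂ :=
  θ x.1 * η x.2

/-- The stack of the `ℤ_N` and the `ℤ_M` toric code; `thetaStack p` is the case `N = p`,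
`M = p ^ 2`. -/
noncomputable def toricCodeStack (N M : ℕ) [NeZero N] [NeZero M] :
    (ZMod N × ZMod N) × (ZMod M × ZMod M) → ℂ :=
  stackStats (toricCodeStats ZMod.stdAddChar) (toricCodeStats ZMod.stdAddChar)

theorem braiding_stackStats {A B : Type*} [AddCommGroup A] [AddCommGroup B]
    (θ : A → ℂ) (η : B → ℂ) (x y : A × B) :
    braiding (stackStats θ η) x y = braiding θ x.1 y.1 * braiding η x.2 y.2 := by
  simp only [braiding, stackStats, Prod.fst_add, Prod.snd_add, mul_inv]
  ring

theorem braiding_toricCodeStats {R : Type*} [CommRing R] (ψ : AddChar R ℂ) (a b : R × R) :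
    braiding (toricCodeStats ψ) a b = ψ (a.1 * b.2 + b.1 * a.2) := by
  have ha : ψ (a.1 * a.2) ≠ 0 := (ψ.val_isUnit _).ne_zero
  have hb : ψ (b.1 * b.2) ≠ 0 := (ψ.val_isUnit _).ne_zero
  have expand : (a + b).1 * (a + b).2 =
      (a.1 * b.2 + b.1 * a.2) + a.1 * a.2 + b.1 * b.2 := by
    simp only [Prod.fst_add, Prod.snd_add]
    ring
  simp only [braiding, toricCodeStats, expand, AddChar.map_add_eq_mul]
  field_simp

theorem stdAddChar_eq_one_iff {N : ℕ} [NeZero N] (x : ZMod N) :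
    ZMod.stdAddChar x = 1 ↔ x = 0 := by
  rw [← AddChar.map_zero_eq_one (ZMod.stdAddChar (N := N)), ZMod.injective_stdAddChar.eq_iff]

theorem stdAddChar_mul_eq_exp {N : ℕ} [NeZero N] (x y : ZMod N) :
    ZMod.stdAddChar (x * y) =
      Complex.exp (2 * Real.pi * Complex.I * (x.val : ℂ) * (y.val : ℂ) / (N : ℂ)) := by
  have hxy : x * y = ((x.val * y.val : ℤ) : ZMod N) := by simp
  rw [hxy, ZMod.stdAddChar_coe]
  push_cast
  ring_nf

theorem thetaStack_eq_toricCodeStack (p : ℕ) [NeZero p] :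
    thetaStack p = toricCodeStack p (p ^ 2) := by
  funext a
  simp only [thetaStack, toricCodeStack, stackStats, toricCodeStats, stdAddChar_mul_eq_exp,
    Nat.cast_pow]

section

variable {N M k : ℕ}

theorem stdAddChar_natCast_mul [NeZero N] [NeZero M] (hM : N * k = M) (x : ZMod M) :
    ZMod.stdAddChar ((k : ZMod M) * x) =
      ZMod.stdAddChar (ZMod.castHom (Dvd.intro k hM) (ZMod N) x) := by
  obtain ⟨j, rfl⟩ := ZMod.intCast_surjective x
  have hk : (k : ℂ) ≠ 0 :=
    Nat.cast_ne_zero.mpr (right_ne_zero_of_mul (hM ▸ NeZero.ne M))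
  have hkj : (k : ZMod M) * (j : ZMod M) = ((k * j : ℤ) : ZMod M) := by simp
  rw [hkj, map_intCast (ZMod.castHom (Dvd.intro k hM) (ZMod N)), ZMod.stdAddChar_coe,
    ZMod.stdAddChar_coe, ← hM]
  push_cast
  field_simp

theorem mem_closure_flux_dyon_iff (h : N ∣ M)
    (x : (ZMod N × ZMod N) × (ZMod M × ZMod M)) :
    x ∈ AddSubgroup.closure {((0, 1), (0, 0)), ((1, 0), (0, 1))} ↔
      x.1.1 = ZMod.castHom h (ZMod N) x.2.2 ∧ x.2.1 = 0 := by
  rw [AddSubgroup.mem_closure_pair]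
  constructor
  · rintro ⟨i, j, rfl⟩
    simp
  · obtain ⟨⟨e₁, m₁⟩, e₂, m₂⟩ := x
    rintro ⟨he₁, he₂⟩
    obtain ⟨i, rfl⟩ := ZMod.intCast_surjective m₁
    obtain ⟨j, rfl⟩ := ZMod.intCast_surjective m₂
    exact ⟨i, j, by simp_all⟩

variable [NeZero N] [NeZero M]

theorem braiding_fluxInv_charge_eq_one_iff (hM : N * k = M)
    (x : (ZMod N × ZMod N) × (ZMod M × ZMod M)) :
    braiding (toricCodeStack N M) x ((0, -1), ((k : ZMod M), 0)) = 1 ↔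
      x.1.1 = ZMod.castHom (Dvd.intro k hM) (ZMod N) x.2.2 := by
  simp only [toricCodeStack, braiding_stackStats, braiding_toricCodeStats, mul_neg, mul_one,
    mul_zero, zero_mul, add_zero, zero_add, stdAddChar_natCast_mul hM]
  rw [← AddChar.map_add_eq_mul, stdAddChar_eq_one_iff, neg_add_eq_zero]

theorem braiding_fluxInv_snd_eq_one_iff (x : (ZMod N × ZMod N) × (ZMod M × ZMod M)) :
    braiding (toricCodeStack N M) x ((0, 0), (0, -1)) = 1 ↔ x.2.1 = 0 := by
  simp [toricCodeStack, braiding_stackStats, braiding_toricCodeStats, stdAddChar_eq_one_iff]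

theorem gauge_out_zp_zpsq_general (hM : N * k = M) :
    {x : (ZMod N × ZMod N) × (ZMod M × ZMod M) |
        braiding (toricCodeStack N M) x ((0, -1), ((k : ZMod M), 0)) = 1 ∧
        braiding (toricCodeStack N M) x ((0, 0), (0, -1)) = 1} =
      (AddSubgroup.closure
          ({((0, 1), (0, 0)), ((1, 0), (0, 1))} : Set ((ZMod N × ZMod N) × (ZMod M × ZMod M))) :
        Set ((ZMod N × ZMod N) × (ZMod M × ZMod M))) := by
  ext x
  rw [Set.mem_ofPred_eq, SetLike.mem_coe, braiding_fluxInv_charge_eq_one_iff hM,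
    braiding_fluxInv_snd_eq_one_iff, mem_closure_flux_dyon_iff]

end

/-- Gauging out `g₁ = m₁⁻¹e₂^p` and `g₂ = m₂⁻¹` in the stack of a `ℤ_p` and a
`ℤ_{p²}` toric code leaves exactly the subtheory generated by `a₁ = m₁` and
`a₂ = e₁m₂`: the anyons braiding trivially with both `g₁` and `g₂` form the
subgroup generated by `a₁` and `a₂`. -/
theorem gauge_out_zp_zpsq (p : ℕ) (hp : p.Prime) :
    {x : (ZMod p × ZMod p) × (ZMod (p ^ 2) × ZMod (p ^ 2)) |
        braiding (thetaStack p) x (((0, -1), ((p : ZMod (p ^ 2)), 0))) = 1 ∧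
        braiding (thetaStack p) x (((0, 0), (0, -1))) = 1} =
      (AddSubgroup.closure
          ({(((0 : ZMod p), 1), ((0 : ZMod (p ^ 2)), 0)),
            (((1 : ZMod p), 0), ((0 : ZMod (p ^ 2)), 1))} :
            Set ((ZMod p × ZMod p) × (ZMod (p ^ 2) × ZMod (p ^ 2)))) :
        Set ((ZMod p × ZMod p) × (ZMod (p ^ 2) × ZMod (p ^ 2)))) := by
  have : NeZero p := ⟨hp.ne_zero⟩
  rw [thetaStack_eq_toricCodeStack]
  exact gauge_out_zp_zpsq_general (sq p).symm
end
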